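/- arXiv:1912.13494 — 6 statements merged into one kernel-verified Lean document; each statement's English description precedes it below -/
import Mathlib

section
/- Let 0 < m < L, α > 0, and set ρ_GD = max(1−αm, αL−1). Take A = I, B = −αI, C = I (n×n identities). If ρ ≥ ρ_GD and γ ∈ [0, ρ²], then there exists ε ∈ [0,1] such that the 2n×2n matrix [[ (1 − α((1−ε)m + εL)) I, αεγ I],[ (1−ε)(L−m) I, εγ I]] is ρ-Schur, i.e., all its eigenvalues lie in the open disk of radius ρ. -/
/-!
The block matrix is a Kronecker-type inflation of the `2 × 2` matrix with entries
`1 - α((1-ε)m + εL)`, `αεγ`, `(1-ε)(L-m)`, `εγ`. By Cayley–Hamilton its eigenvalues are roots of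
`z² - t z + d` with `t = 1 - α((1-ε)m + εL) + εγ` and `d = εγ(1 - αL)`
(`isSchur_fromBlocks`), so it suffices to verify the Jury conditions
`d < ρ²`, `ρ t < ρ² + d` and `-ρ t < ρ² + d` (`norm_lt_of_quadratic`).

If `1 - αm < ρ`, then `ε = 0` works, since `d = 0` and `t = 1 - αm ∈ (-ρ, ρ)`.
Otherwise `ρ = 1 - αm < 1`, and `ε = 1/2` works: the condition `ρ t < ρ² + d` becomes
`εα(L-m)(ρ - γ) > 0`, which holds because `γ ≤ ρ² < ρ`.
-/

open Matrix Filter RealInnerProductSpace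


/-- The action of a real matrix on Euclidean space. -/
noncomputable def mulVecE {ι κ : Type*} [Fintype ι] [Fintype κ] [DecidableEq κ]
    (A : Matrix ι κ ℝ) (v : EuclideanSpace ℝ κ) : EuclideanSpace ℝ ι :=
  Matrix.toEuclideanLin A v

/-- `(x,u) ∈ B(A,B)`: trajectories of the LTI system `x(k+1) = A x(k) + B u(k)`. -/
def IsTraj {ι κ : Type*} [Fintype ι] [Fintype κ] [DecidableEq ι] [DecidableEq κ]
    (A : Matrix ι ι ℝ) (B : Matrix ι κ ℝ)
    (x : ℕ → EuclideanSpace ℝ ι) (u : ℕ → EuclideanSpace ℝ κ) : Prop :=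
  ∀ k, x (k + 1) = mulVecE A (x k) + mulVecE B (u k)

/-- `(x,u) ∈ IQC(M,ρ)` for `M = [[Q, Sᵀ],[S, R]]`: the hard ρ-integral quadratic constraint. -/
def SatIQC {ι κ : Type*} [Fintype ι] [Fintype κ] [DecidableEq ι] [DecidableEq κ]
    (Q : Matrix ι ι ℝ) (S : Matrix κ ι ℝ) (R : Matrix κ κ ℝ) (ρ : ℝ)
    (x : ℕ → EuclideanSpace ℝ ι) (u : ℕ → EuclideanSpace ℝ κ) : Prop :=
  ∀ N : ℕ, 0 ≤ ∑ k ∈ Finset.range (N + 1), (ρ ^ (2 * k))⁻¹ *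
    (⟪mulVecE Q (x k), x k⟫ + 2 * ⟪mulVecE S (x k), u k⟫ + ⟪mulVecE R (u k), u k⟫)

/-- The triple `(A,B,M)`, `M = [[Q, Sᵀ],[S, R]]`, is ρ-hyperstable. -/
def Hyperstable {ι κ : Type*} [Fintype ι] [Fintype κ] [DecidableEq ι] [DecidableEq κ]
    (A : Matrix ι ι ℝ) (B : Matrix ι κ ℝ)
    (Q : Matrix ι ι ℝ) (S : Matrix κ ι ℝ) (R : Matrix κ κ ℝ) (ρ : ℝ) : Prop :=
  ∃ c > 0, ∀ (x : ℕ → EuclideanSpace ℝ ι) (u : ℕ → EuclideanSpace ℝ κ),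
    IsTraj A B x u → SatIQC Q S R ρ x u → ∀ k, ‖x k‖ ≤ c * ρ ^ k * ‖x 0‖

/-- The triple `(A,B,M)`, `M = [[Q, Sᵀ],[S, R]]`, is ρ-minimally stable. -/
def MinStable {ι κ : Type*} [Fintype ι] [Fintype κ] [DecidableEq ι] [DecidableEq κ]
    (A : Matrix ι ι ℝ) (B : Matrix ι κ ℝ)
    (Q : Matrix ι ι ℝ) (S : Matrix κ ι ℝ) (R : Matrix κ κ ℝ) (ρ : ℝ) : Prop :=
  ∀ x₀ : EuclideanSpace ℝ ι, ∃ (x : ℕ → EuclideanSpace ℝ ι) (u : ℕ → EuclideanSpace ℝ κ),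
    IsTraj A B x u ∧ SatIQC Q S R ρ x u ∧ x 0 = x₀ ∧
    Tendsto (fun k => (ρ ^ k)⁻¹ • x k) atTop (nhds 0)

/-- A square real matrix is ρ-Schur if all its complex eigenvalues lie in the open disk of
radius ρ. -/
def IsSchur {ι : Type*} [Fintype ι] [DecidableEq ι] (ρ : ℝ) (A : Matrix ι ι ℝ) : Prop :=
  ∀ z ∈ spectrum ℂ (A.map (Complex.ofReal ·)), ‖z‖ < ρ

/-- The transfer function `H(z) = C (zI - A)⁻¹ B`. -/
noncomputable def transferH {d n : ℕ} (A : Matrix (Fin d) (Fin d) ℝ)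
    (B : Matrix (Fin d) (Fin n) ℝ) (C : Matrix (Fin n) (Fin d) ℝ) (z : ℂ) :
    Matrix (Fin n) (Fin n) ℂ :=
  (C.map (Complex.ofReal ·)) *
    (z • (1 : Matrix (Fin d) (Fin d) ℂ) - A.map (Complex.ofReal ·))⁻¹ *
    (B.map (Complex.ofReal ·))

/-- The Jury stability criterion for a real monic quadratic, with radius `ρ`. -/
lemma norm_lt_of_quadratic {ρ t d : ℝ} (hρ : 0 < ρ) (hd : d < ρ ^ 2)
    (h1 : ρ * t < ρ ^ 2 + d) (h2 : -(ρ * t) < ρ ^ 2 + d) {z : ℂ}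
    (hz : z ^ 2 - t * z + d = 0) : ‖z‖ < ρ := by
  have hre := congrArg Complex.re hz
  have him := congrArg Complex.im hz
  simp [pow_two] at hre him
  have ht1 : t < 2 * ρ := by nlinarith
  have ht2 : -(2 * ρ) < t := by nlinarith
  refine lt_of_pow_lt_pow_left₀ 2 hρ.le ?_
  rw [Complex.sq_norm, Complex.normSq_apply]
  have hy : z.im * (2 * z.re - t) = 0 := by linarith
  rcases mul_eq_zero.mp hy with hy | hy
  · rw [hy] at hre ⊢
    -- The quadratic is positive at `±ρ` and monotone beyond these points since `|t| < 2ρ`.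
    have hlt : z.re < ρ := by
      by_contra! h
      nlinarith [mul_nonneg (sub_nonneg.2 h) (by linarith : 0 ≤ z.re + ρ - t)]
    have hgt : -ρ < z.re := by
      by_contra! h
      nlinarith [mul_nonneg (by linarith : 0 ≤ -ρ - z.re) (by linarith : 0 ≤ t + ρ - z.re)]
    nlinarith
  · -- A non-real pair of roots is conjugate, with squared modulus `d`.
    have ht : t = 2 * z.re := by linarith
    rw [ht] at hre
    nlinarith

/-- A matrix whose blocks are the scalars `a, b, c, e` is ρ-Schur as soon as the trace `a + e` and
determinant `a e - b c` satisfy the Jury conditions. -/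
lemma isSchur_fromBlocks {n : ℕ} {ρ a b c e : ℝ} (hρ : 0 < ρ) (hd : a * e - b * c < ρ ^ 2)
    (h1 : ρ * (a + e) < ρ ^ 2 + (a * e - b * c))
    (h2 : -(ρ * (a + e)) < ρ ^ 2 + (a * e - b * c)) :
    IsSchur ρ (Matrix.fromBlocks (a • (1 : Matrix (Fin n) (Fin n) ℝ))
      (b • (1 : Matrix (Fin n) (Fin n) ℝ))
      (c • (1 : Matrix (Fin n) (Fin n) ℝ))
      (e • (1 : Matrix (Fin n) (Fin n) ℝ))) := by
  intro z hz
  refine norm_lt_of_quadratic (t := a + e) (d := a * e - b * c) hρ hd h1 h2 ?_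
  by_contra hq
  apply hz
  set q : ℂ := z ^ 2 - ((a + e : ℝ) : ℂ) * z + ((a * e - b * c : ℝ) : ℂ) with hqdef
  have hM : (Matrix.fromBlocks (a • (1 : Matrix (Fin n) (Fin n) ℝ))
      (b • (1 : Matrix (Fin n) (Fin n) ℝ))
      (c • (1 : Matrix (Fin n) (Fin n) ℝ))
      (e • (1 : Matrix (Fin n) (Fin n) ℝ))).map
      (Complex.ofReal ·) = Matrix.fromBlocks ((a : ℂ) • (1 : Matrix (Fin n) (Fin n) ℂ))
        ((b : ℂ) • (1 : Matrix (Fin n) (Fin n) ℂ)) ((c : ℂ) • (1 : Matrix (Fin n) (Fin n) ℂ)) ((e : ℂ) • (1 : Matrix (Fin n) (Fin n) ℂ)) := by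
    rw [Matrix.fromBlocks_map]
    congr 1 <;> ext i j <;> by_cases h : i = j <;> simp [h]
  rw [hM]
  have hone : algebraMap ℂ (Matrix (Fin n ⊕ Fin n) (Fin n ⊕ Fin n) ℂ) z =
      Matrix.fromBlocks (z • (1 : Matrix (Fin n) (Fin n) ℂ)) 0 0 (z • (1 : Matrix (Fin n) (Fin n) ℂ)) := by
    rw [Algebra.algebraMap_eq_smul_one, ← Matrix.fromBlocks_one, Matrix.fromBlocks_smul]
    simp
  rw [spectrum.mem_resolventSet_iff, hone, Matrix.isUnit_iff_isUnit_det]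
  -- By Cayley–Hamilton, `q⁻¹ (z + M - t)` is an inverse of `z - M`.
  refine Matrix.isUnit_det_of_right_inverse
    (B := q⁻¹ • Matrix.fromBlocks ((z - e) • (1 : Matrix (Fin n) (Fin n) ℂ))
      ((b : ℂ) • (1 : Matrix (Fin n) (Fin n) ℂ)) ((c : ℂ) • (1 : Matrix (Fin n) (Fin n) ℂ)) ((z - a) • (1 : Matrix (Fin n) (Fin n) ℂ))) ?_
  rw [Matrix.mul_smul, inv_smul_eq_iff₀ hq, sub_eq_add_neg, Matrix.fromBlocks_neg,
    Matrix.fromBlocks_add, Matrix.fromBlocks_multiply, ← Matrix.fromBlocks_one,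
    Matrix.fromBlocks_smul]
  have hq' : q = (z - a) * (z - e) - b * c := by rw [hqdef]; push_cast; ring
  rw [hq']
  congr 1 <;> ext i j <;> by_cases h : i = j <;> simp [h] <;> ring

/-- **Lemma 2.16 (minimal stability of the system underlying gradient descent).**
Let `0 < m < L`, `α > 0`, `ρ_GD = max (1-αm) (αL-1)`.  If `ρ ≥ ρ_GD` and
`γ ∈ [0, ρ²]`, then there exists `ε ∈ [0,1]` such that the matrix
`[[(1 - α((1-ε)m + εL))I, αεγI],[(1-ε)(L-m)I, εγI]]` is ρ-Schur. -/
theorem stmt_13 {n : ℕ} (m L α γ ρ : ℝ) (hm : 0 < m) (hmL : m < L) (hα : 0 < α)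
    (hρ : max (1 - α * m) (α * L - 1) ≤ ρ) (hγ : γ ∈ Set.Icc 0 (ρ ^ 2)) :
    ∃ ε ∈ Set.Icc (0 : ℝ) 1,
      IsSchur ρ (Matrix.fromBlocks
        ((1 - α * ((1 - ε) * m + ε * L)) • (1 : Matrix (Fin n) (Fin n) ℝ))
        ((α * ε * γ) • (1 : Matrix (Fin n) (Fin n) ℝ))
        (((1 - ε) * (L - m)) • (1 : Matrix (Fin n) (Fin n) ℝ))
        ((ε * γ) • (1 : Matrix (Fin n) (Fin n) ℝ))) := by
  obtain ⟨hρ1, hρ2⟩ := max_le_iff.mp hρ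
  obtain ⟨hγ0, hγ1⟩ := hγ
  have hΔ : 0 < α * (L - m) := mul_pos hα (sub_pos.2 hmL)
  have hαm : 0 < α * m := mul_pos hα hm
  have hρ0 : 0 < ρ := by linarith
  rcases hρ1.lt_or_eq with hlt | heq
  · refine ⟨0, by simp, isSchur_fromBlocks hρ0 ?_ ?_ ?_⟩ <;> nlinarith
  · have hρlt : ρ < 1 := by linarith
    have hγρ : γ < ρ := by nlinarith
    -- `1 - αL` lies in `[-ρ, ρ]`, which bounds the determinant `γ(1 - αL)/2`.
    have hd1 : γ * (1 - α * L) ≤ ρ ^ 2 * ρ := by nlinarith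
    have hd2 : -(ρ ^ 2 * ρ) ≤ γ * (1 - α * L) := by nlinarith
    have hρ3 : ρ ^ 2 * ρ < ρ ^ 2 := by nlinarith [pow_pos hρ0 2]
    have hdet : (1 - α * ((1 - 1 / 2) * m + 1 / 2 * L)) * (1 / 2 * γ) -
        α * (1 / 2) * γ * ((1 - 1 / 2) * (L - m)) = γ * (1 - α * L) / 2 := by ring
    have htr : 1 - α * ((1 - 1 / 2) * m + 1 / 2 * L) + 1 / 2 * γ =
        ρ - α * (L - m) / 2 + γ / 2 := by rw [← heq]; ring
    refine ⟨1 / 2, by norm_num, isSchur_fromBlocks hρ0 ?_ ?_ ?_⟩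
    · rw [hdet]; linarith [pow_pos hρ0 2]
    · rw [hdet, htr]
      have hL : 1 - α * L = ρ - α * (L - m) := by rw [← heq]; ring
      rw [hL]
      nlinarith [mul_pos hΔ (sub_pos.2 hγρ)]
    · rw [hdet, htr]
      have hb : α * (L - m) ≤ 2 * ρ := by linarith
      nlinarith [mul_nonneg hρ0.le (sub_nonneg.2 hb), mul_nonneg hρ0.le hγ0, pow_pos hρ0 2]
end

section
/- Let 0 < m < L, δ ∈ (0,1), α > 0. Define F(t,λ) = −α²(L−m)² + 2mLα²λ(1−δ²) + 2αλ(m+L)(t−1) + λ(2−δ²λ)(t−1)², ρ_GD(δ) = max(1−(1−δ)αm, (1+δ)αL−1), and ρ⋆ = inf{ρ ≥ ρ_GD(δ) : F(ρ,λ) ≥ 0 and F(−ρ,λ) ≥ 0 for some λ ∈ [0, 2/δ²]}. Then: (a) the infimum defining ρ⋆ is taken over a nonempty set (so ρ⋆ is finite), and there exists λ⋆ ∈ [0, 2/δ²] with F(ρ⋆,λ⋆) ≥ 0 and F(−ρ⋆,λ⋆) ≥ 0; (b) any such λ⋆ satisfies min(F(ρ⋆,λ⋆), F(−ρ⋆,λ⋆))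 = 0 and λ⋆ ∈ (0, 2/δ²); and (c) if max(F(ρ⋆,λ⋆), F(−ρ⋆,λ⋆)) > 0, then ρ⋆ = ρ_GD(δ). -/
/-!
Write `s = t - 1`, `A = α (L - m)` and `G s = 2 m L α² (1 - δ²) + 2 α (m + L) s + 2 s²`, so that
`F t l = -A² + l G s - δ² l² s²` is a concave quadratic in `l`. The argument rests on the
factorizations

* `G s - 2 δ s A = 2 (s + (1 - δ) α L) (s + (1 + δ) α m)`,
* `G s + 2 δ s A = 2 (s + (1 - δ) α m) (s + (1 + δ) α L)`.

The feasible set of pairs `(ρ, l)` is closed with `l` in a compact interval, so its projection to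
`ρ` is closed; it is bounded below by `ρGD`, and nonempty because `F t (1/δ²)` is quadratic in `t`
with positive leading coefficient. Hence the infimum is attained. The endpoint `l = 0` gives
`F < 0`, and `l = 2/δ²` gives `F (-ρ) l < 0`, so `l` is interior.

At `ρ = ρGD` one of `F (±ρ) l` is minus a square, by the second factorization. For `ρ > ρGD`, both
values being positive would allow `ρ` to be decreased, by continuity. This gives `min = 0`. If
moreover one value is positive and the other zero with `ρ > ρGD`, then both factorizations are
strictly positive, so the vanishing quadratic has nonzero `l`-derivative
(`deriv_ne_zero_of_eq_zero`); moving `l` slightly makes both values positive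
(`exists_both_pos`), which was excluded.
-/

open Set Filter Topology

/-- A root of `l ↦ -A² + l G - δ² l² s²` is simple when `G > ± 2 δ s A`: at a double root,
`A = ± δ l s` and hence `G = ± 2 δ s A`. -/
lemma deriv_ne_zero_of_eq_zero {A G δ s l : ℝ} (h1 : 0 < G - 2 * δ * s * A)
    (h2 : 0 < G + 2 * δ * s * A) (h0 : -A ^ 2 + l * G - δ ^ 2 * l ^ 2 * s ^ 2 = 0) :
    G - 2 * δ ^ 2 * l * s ^ 2 ≠ 0 := by
  intro hD
  have hG : G = 2 * δ ^ 2 * l * s ^ 2 := by linarith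
  have hprod : (A - δ * l * s) * (A + δ * l * s) = 0 := by
    rw [hG] at h0
    linarith
  rcases mul_eq_zero.mp hprod with h | h
  · have hA : A = δ * l * s := by linarith
    rw [hG, hA] at h1
    exact absurd h1 (by ring_nf; simp)
  · have hA : A = -(δ * l * s) := by linarith
    rw [hG, hA] at h2
    exact absurd h2 (by ring_nf; simp)

/-- If one quadratic vanishes at `l` with nonzero derivative and a continuous `g` is positive
there, both are positive at some nearby point of the open interval. -/
lemma exists_both_pos {A G B l b : ℝ} {g : ℝ → ℝ} (hg : Continuous g) (hgl : 0 < g l)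
    (hl : l ∈ Ioo 0 b) (h0 : -A ^ 2 + l * G - B * l ^ 2 = 0) (hD : G - 2 * B * l ≠ 0) :
    ∃ k ∈ Ioo 0 b, 0 < -A ^ 2 + k * G - B * k ^ 2 ∧ 0 < g k := by
  set D := G - 2 * B * l with hDdef
  have hc : Continuous fun c : ℝ => l + c * D := by fun_prop
  have e1 : ∀ᶠ c in 𝓝 (0 : ℝ), l + c * D ∈ Ioo 0 b :=
    hc.continuousAt.eventually_mem (isOpen_Ioo.mem_nhds (by simpa using hl))
  have e2 : ∀ᶠ c in 𝓝 (0 : ℝ), 0 < g (l + c * D) :=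
    (hg.comp hc).continuousAt.eventually_mem (isOpen_Ioi.mem_nhds (by simpa using hgl))
  have e3 : ∀ᶠ c in 𝓝 (0 : ℝ), 0 < 1 - B * c := by
    have hc' : Continuous fun c : ℝ => 1 - B * c := by fun_prop
    exact hc'.continuousAt.eventually_mem (isOpen_Ioi.mem_nhds (by simp))
  have e : ∀ᶠ c in 𝓝[>] (0 : ℝ), l + c * D ∈ Ioo 0 b ∧ 0 < g (l + c * D) ∧ 0 < 1 - B * c :=
    (e1.and (e2.and e3)).filter_mono nhdsWithin_le_nhds
  obtain ⟨c, ⟨hc1, hc2, hc3⟩, hc0⟩ := (e.and self_mem_nhdsWithin).exists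
  refine ⟨l + c * D, hc1, ?_, hc2⟩
  -- The step `c * D` makes the first-order term `c * D²`, of positive sign.
  have key : -A ^ 2 + (l + c * D) * G - B * (l + c * D) ^ 2 = c * D ^ 2 * (1 - B * c) := by
    have : G = D + 2 * B * l := by rw [hDdef]; ring
    rw [this] at h0 ⊢
    linear_combination h0
  rw [key]
  have : 0 < c := hc0
  positivity

/-- **Lemma 3.1 (properties of `(ρ⋆, λ⋆)`).**
Let `0 < m < L`, `δ ∈ (0,1)`, `α > 0`, and let `F`, `ρ_GD(δ)` and
`ρ⋆ = inf {ρ ≥ ρ_GD(δ) : F(±ρ,λ) ≥ 0 for some λ ∈ [0, 2/δ²]}` be as in the paper.  Then the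
set defining `ρ⋆` is nonempty, a maximizer `λ⋆ ∈ [0,2/δ²]` with `F(±ρ⋆,λ⋆) ≥ 0` exists, and
any such `λ⋆` satisfies `min (F(ρ⋆,λ⋆)) (F(-ρ⋆,λ⋆)) = 0`, `λ⋆ ∈ (0, 2/δ²)`, and if
`max (F(ρ⋆,λ⋆)) (F(-ρ⋆,λ⋆)) > 0` then `ρ⋆ = ρ_GD(δ)`. -/
theorem stmt_15 (m L α δ : ℝ) (hm : 0 < m) (hmL : m < L) (hα : 0 < α)
    (hδ0 : 0 < δ) (hδ1 : δ < 1)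
    (F : ℝ → ℝ → ℝ)
    (hF : ∀ t l, F t l = -α ^ 2 * (L - m) ^ 2 + 2 * m * L * α ^ 2 * l * (1 - δ ^ 2) +
      2 * α * l * (m + L) * (t - 1) + l * (2 - δ ^ 2 * l) * (t - 1) ^ 2)
    (ρGD : ℝ) (hρGD : ρGD = max (1 - (1 - δ) * (α * m)) ((1 + δ) * (α * L) - 1))
    (ρs : ℝ)
    (hρs : ρs = sInf {ρ : ℝ | ρGD ≤ ρ ∧
      ∃ l ∈ Set.Icc (0 : ℝ) (2 / δ ^ 2), 0 ≤ F ρ l ∧ 0 ≤ F (-ρ) l}) :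
    ({ρ : ℝ | ρGD ≤ ρ ∧
        ∃ l ∈ Set.Icc (0 : ℝ) (2 / δ ^ 2), 0 ≤ F ρ l ∧ 0 ≤ F (-ρ) l}).Nonempty ∧
    (∃ ls ∈ Set.Icc (0 : ℝ) (2 / δ ^ 2), 0 ≤ F ρs ls ∧ 0 ≤ F (-ρs) ls) ∧
    (∀ ls ∈ Set.Icc (0 : ℝ) (2 / δ ^ 2), 0 ≤ F ρs ls → 0 ≤ F (-ρs) ls →
      min (F ρs ls) (F (-ρs) ls) = 0 ∧
      ls ∈ Set.Ioo (0 : ℝ) (2 / δ ^ 2) ∧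
      (0 < max (F ρs ls) (F (-ρs) ls) → ρs = ρGD)) := by
  set S : Set ℝ := {ρ : ℝ | ρGD ≤ ρ ∧
      ∃ l ∈ Set.Icc (0 : ℝ) (2 / δ ^ 2), 0 ≤ F ρ l ∧ 0 ≤ F (-ρ) l} with hS
  have hFc : Continuous fun p : ℝ × ℝ => F p.1 p.2 := by
    simp only [hF]
    fun_prop
  have hL : 0 < L := hm.trans hmL
  have hαm : 0 < α * m := by positivity
  have hαL : 0 < α * L := by positivity
  have hαmL : α * m < α * L := by nlinarith
  have hg1 : 1 - (1 - δ) * (α * m) ≤ ρGD := hρGD ▸ le_max_left _ _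
  have hg2 : (1 + δ) * (α * L) - 1 ≤ ρGD := hρGD ▸ le_max_right _ _
  have hδ2 : 0 < δ ^ 2 := by positivity
  have hb : (0 : ℝ) < 2 / δ ^ 2 := by positivity
  have hne : S.Nonempty := by
    -- At `l = 1/δ²`, the value is `-A² + (s² + 2α(m+L)s + 2mLα²(1-δ²))/δ²`.
    set ρ : ℝ := |ρGD| + 1 + 2 * (α * (m + L)) + α * (L - m) with hρ
    have hA : 0 < α * (L - m) := mul_pos hα (sub_pos.2 hmL)
    have hsum : 0 < α * (m + L) := by positivity
    have hval : ∀ t, F t (1 / δ ^ 2) = ((t - 1) ^ 2 + 2 * (α * (m + L)) * (t - 1)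
        + 2 * m * L * α ^ 2 * (1 - δ ^ 2) - δ ^ 2 * (α * (L - m)) ^ 2) / δ ^ 2 := by
      intro t
      rw [hF]
      field_simp
      ring
    have hconst : 0 ≤ 2 * m * L * α ^ 2 * (1 - δ ^ 2) := by
      have : 0 ≤ 1 - δ ^ 2 := by nlinarith
      positivity
    have hδA : δ ^ 2 * (α * (L - m)) ^ 2 ≤ (α * (L - m)) ^ 2 := by
      have : δ ^ 2 ≤ 1 := by nlinarith
      nlinarith [sq_nonneg (α * (L - m))]
    have habs := abs_nonneg ρGD
    refine ⟨ρ, ?_, 1 / δ ^ 2, ⟨by positivity, by gcongr; norm_num⟩, ?_, ?_⟩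
    · linarith [le_abs_self ρGD]
    · rw [hval]
      refine div_nonneg ?_ hδ2.le
      have h1 : α * (L - m) ≤ ρ - 1 := by linarith
      have h2 : (α * (L - m)) ^ 2 ≤ (ρ - 1) ^ 2 := by gcongr
      have h3 : 0 ≤ 2 * (α * (m + L)) * (ρ - 1) := mul_nonneg (by linarith) (by linarith)
      linarith
    · rw [hval]
      refine div_nonneg ?_ hδ2.le
      have h1 : α * (L - m) ≤ ρ + 1 - 2 * (α * (m + L)) := by linarith
      have h2 : α * (L - m) ≤ ρ + 1 := by linarith
      have h3 : α * (L - m) * (α * (L - m)) ≤ (ρ + 1) * (ρ + 1 - 2 * (α * (m + L))) := by gcongr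
      nlinarith
  have hbdd : BddBelow S := ⟨ρGD, fun ρ h => h.1⟩
  have hclosed : IsClosed S := by
    let K : Set ℝ := Set.Icc (0 : ℝ) (2 / δ ^ 2)
    have : CompactSpace K := isCompact_iff_compactSpace.1 isCompact_Icc
    let T : Set (ℝ × K) := {p | ρGD ≤ p.1 ∧ 0 ≤ F p.1 p.2 ∧ 0 ≤ F (-p.1) p.2}
    have hT : IsClosed T := by
      have c1 : Continuous fun p : ℝ × K => F p.1 p.2 :=
        hFc.comp (f := fun p : ℝ × K => (p.1, (p.2 : ℝ))) (by fun_prop)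
      have c2 : Continuous fun p : ℝ × K => F (-p.1) p.2 :=
        hFc.comp (f := fun p : ℝ × K => (-p.1, (p.2 : ℝ))) (by fun_prop)
      exact (isClosed_le continuous_const continuous_fst).inter
        ((isClosed_le continuous_const c1).inter (isClosed_le continuous_const c2))
    have himg : S = Prod.fst '' T := by
      ext ρ
      constructor
      · rintro ⟨h1, l, hl, h2, h3⟩
        exact ⟨(ρ, ⟨l, hl⟩), ⟨h1, h2, h3⟩, rfl⟩
      · rintro ⟨⟨ρ', l, hl⟩, ⟨h1, h2, h3⟩, rfl⟩
        exact ⟨h1, l, hl, h2, h3⟩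
    rw [himg]
    exact isClosedMap_fst_of_compactSpace T hT
  have hmem : ρs ∈ S := hρs ▸ hclosed.csInf_mem hne hbdd
  have hge : ρGD ≤ ρs := hmem.1
  -- Strict positivity at some `l` and `ρs > ρGD` would contradict minimality of `ρs`.
  have hmin : ∀ l ∈ Set.Icc (0 : ℝ) (2 / δ ^ 2), 0 < F ρs l → 0 < F (-ρs) l → ρs ≤ ρGD := by
    intro l hl h1 h2
    by_contra! hlt
    have c1 : Continuous fun r : ℝ => F r l :=
      hFc.comp (f := fun r : ℝ => (r, l)) (by fun_prop)
    have c2 : Continuous fun r : ℝ => F (-r) l :=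
      hFc.comp (f := fun r : ℝ => (-r, l)) (by fun_prop)
    have e : ∀ᶠ r in 𝓝[<] ρs, ρGD < r ∧ 0 < F r l ∧ 0 < F (-r) l :=
      ((lt_mem_nhds hlt).and ((c1.continuousAt.eventually_mem (isOpen_Ioi.mem_nhds h1)).and
        (c2.continuousAt.eventually_mem (isOpen_Ioi.mem_nhds h2)))).filter_mono
          nhdsWithin_le_nhds
    obtain ⟨r, ⟨hr1, hr2, hr3⟩, hr⟩ := (e.and self_mem_nhdsWithin).exists
    have : ρs ≤ r := hρs ▸ csInf_le hbdd ⟨hr1.le, l, hl, hr2.le, hr3.le⟩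
    exact absurd hr (not_lt.2 this)
  have hform : ∀ t l, F t l = -(α * (L - m)) ^ 2 + l * (2 * m * L * α ^ 2 * (1 - δ ^ 2) +
      2 * α * (m + L) * (t - 1) + 2 * (t - 1) ^ 2) - δ ^ 2 * (t - 1) ^ 2 * l ^ 2 := by
    intro t l
    rw [hF]
    ring
  refine ⟨hne, hmem.2, fun ls hls h1 h2 => ?_⟩
  have hIoo : ls ∈ Set.Ioo (0 : ℝ) (2 / δ ^ 2) := by
    refine ⟨lt_of_le_of_ne hls.1 ?_, lt_of_le_of_ne hls.2 ?_⟩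
    · rintro rfl
      rw [hform] at h1
      have : 0 < α * (L - m) := mul_pos hα (sub_pos.2 hmL)
      nlinarith
    · intro h
      -- At `l = 2/δ²` the quadratic term in `t - 1` cancels.
      have hl : 2 - δ ^ 2 * ls = 0 := by rw [h]; field_simp; ring
      rw [hF, hl] at h2
      have hpos : 0 < ls := h ▸ hb
      have h3 : (-ρs - 1) ≤ -((1 + δ) * (α * L)) := by linarith
      have h4 : 2 * α * ls * (m + L) * (-ρs - 1) ≤
          2 * α * ls * (m + L) * -((1 + δ) * (α * L)) := by gcongr
      have h5 : 0 < 2 * α ^ 2 * ls * L * (1 + δ) * (L + δ * m) := by positivity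
      nlinarith [sq_nonneg (α * (L - m))]
  have hminzero : min (F ρs ls) (F (-ρs) ls) = 0 := by
    refine le_antisymm ?_ (le_min h1 h2)
    by_contra! hpos
    obtain ⟨p1, p2⟩ := lt_min_iff.1 hpos
    have heq : ρs = ρGD := le_antisymm (hmin ls hls p1 p2) hge
    rcases max_choice (1 - (1 - δ) * (α * m)) ((1 + δ) * (α * L) - 1) with h | h
    · rw [heq, hρGD, h, hform] at p1
      nlinarith [sq_nonneg (α * (L - m) - ls * δ * ((1 - δ) * (α * m)))]
    · rw [heq, hρGD, h, hform] at p2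
      nlinarith [sq_nonneg (α * (L - m) - ls * δ * ((1 + δ) * (α * L)))]
  refine ⟨hminzero, hIoo, fun hmax => ?_⟩
  by_contra hneq
  have hlt : ρGD < ρs := lt_of_le_of_ne hge (Ne.symm hneq)
  have cF : ∀ t, Continuous fun l : ℝ => F t l := fun t =>
    hFc.comp (f := fun l : ℝ => (t, l)) (by fun_prop)
  rcases min_choice (F ρs ls) (F (-ρs) ls) with h | h
  · have hz : F ρs ls = 0 := h ▸ hminzero
    have hp : 0 < F (-ρs) ls := by
      rcases lt_max_iff.1 hmax with h' | h'
      · exact absurd hz h'.ne'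
      · exact h'
    have f1 : 0 < ρs - 1 + (1 - δ) * (α * m) := by linarith
    have f2 : 0 < ρs - 1 + (1 + δ) * (α * m) := by nlinarith
    have f3 : 0 < ρs - 1 + (1 - δ) * (α * L) := by nlinarith
    have f4 : 0 < ρs - 1 + (1 + δ) * (α * L) := by nlinarith
    rw [hform] at hz
    obtain ⟨k, hk, k1, k2⟩ := exists_both_pos (cF (-ρs)) hp hIoo hz (by
      have := deriv_ne_zero_of_eq_zero (A := α * (L - m)) (δ := δ) (s := ρs - 1) (l := ls)
        (G := 2 * m * L * α ^ 2 * (1 - δ ^ 2) + 2 * α * (m + L) * (ρs - 1) + 2 * (ρs - 1) ^ 2)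
        (by linarith [mul_pos f3 f2]) (by linarith [mul_pos f1 f4]) (by linarith)
      convert this using 1
      ring)
    rw [← hform] at k1
    exact absurd (hmin k (Ioo_subset_Icc_self hk) k1 k2) (not_le.2 hlt)
  · have hz : F (-ρs) ls = 0 := h ▸ hminzero
    have hp : 0 < F ρs ls := by
      rcases lt_max_iff.1 hmax with h' | h'
      · exact h'
      · exact absurd hz h'.ne'
    have f4 : -ρs - 1 + (1 + δ) * (α * L) < 0 := by linarith
    have f3 : -ρs - 1 + (1 - δ) * (α * L) < 0 := by nlinarith
    have f2 : -ρs - 1 + (1 + δ) * (α * m) < 0 := by nlinarith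
    have f1 : -ρs - 1 + (1 - δ) * (α * m) < 0 := by nlinarith
    rw [hform] at hz
    obtain ⟨k, hk, k1, k2⟩ := exists_both_pos (cF ρs) hp hIoo hz (by
      have := deriv_ne_zero_of_eq_zero (A := α * (L - m)) (δ := δ) (s := -ρs - 1) (l := ls)
        (G := 2 * m * L * α ^ 2 * (1 - δ ^ 2) + 2 * α * (m + L) * (-ρs - 1) + 2 * (-ρs - 1) ^ 2)
        (by linarith [mul_pos_of_neg_of_neg f3 f2]) (by linarith [mul_pos_of_neg_of_neg f1 f4])
        (by linarith)
      convert this using 1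
      ring)
    rw [← hform] at k1
    exact absurd (hmin k (Ioo_subset_Icc_self hk) k2 k1) (not_le.2 hlt)
end

section
/- Let 0 < m < L, δ ∈ (0,1), α > 0, and let κ = L/m. With F, ρ_GD(δ), and ρ⋆ as defined below, ρ⋆ = ρ_GD(δ) holds if and only if one of the following holds: (1) δ < 2/(κ+1) and α ≤ α₋ := (1/(1−δ))·(2/(L+m) − δ/m); or (2) α ≥ α₊ := (1/(1+δ))·(2/(L+m) + δ/L). -/
/-!
Write `A = α m`, `B = α L` and `s = 1 - t`. Then `F(t, l)` becomes
`G(s, l) = -(B - A)² + 2 l P(s) - δ² l² s²`, where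
`P(s) = δ (B - A) s + (s - (1 + δ) B) (s - (1 - δ) A)`.
If `s` is one of the two roots `(1 - δ) A`, `(1 + δ) B`, then `G(s, l) = -(δ s l - (B - A))²`, so
`G(s, l) ≥ 0` forces `δ s l = B - A`.

At `ρ = ρ_GD(δ)` one of `1 - ρ = (1 - δ) A` and `1 + ρ = (1 + δ) B` holds, so the multiplier `l` is
determined. For that `l` the inequality at the other point `2 - s` factors
(`gap_lower`, `gap_upper`), and its sign is that of an expression equivalent to `α ≤ α₋`,
respectively `α ≥ α₊`. So feasibility of `ρ_GD(δ)` is equivalent to the stated alternative.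

Finally, the feasible set is closed, because `l` ranges over a compact interval. Hence
`ρ⋆ = ρ_GD(δ)` exactly when `ρ_GD(δ)` is itself feasible. If the feasible set were empty, `sInf`
would take the value `0`, which differs from `ρ_GD(δ) > 0`.
-/

/-- The polynomial `F(t, l)` in the coordinates `A = α m`, `B = α L`, `s = 1 - t`. -/
def gapForm (A B δ s l : ℝ) : ℝ :=
  -(B - A) ^ 2 + 2 * l * (s ^ 2 - (A + B) * s + A * B * (1 - δ ^ 2)) - δ ^ 2 * l ^ 2 * s ^ 2

lemma gapForm_lower (A B δ l : ℝ) :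
    gapForm A B δ ((1 - δ) * A) l = -(δ * ((1 - δ) * A) * l - (B - A)) ^ 2 := by
  unfold gapForm; ring

lemma gapForm_upper (A B δ l : ℝ) :
    gapForm A B δ ((1 + δ) * B) l = -(δ * ((1 + δ) * B) * l - (B - A)) ^ 2 := by
  unfold gapForm; ring

/-- Value at the reflected point `2 - s` when `s = (1 - δ) A` and `l` is the only multiplier
admissible at `s`. -/
lemma gap_lower {A B δ l : ℝ} (h : δ * ((1 - δ) * A) * l = B - A) :
    ((1 - δ) * A) * gapForm A B δ (2 - (1 - δ) * A) l =
      4 * l * (1 - (1 - δ) * A) * (2 * A - δ * (A + B) - (1 - δ) * A * (A + B)) := by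
  unfold gapForm
  linear_combination
    (((1 - δ) * A) * (B - A) - δ * l * (2 - (1 - δ) * A) ^ 2) * h

/-- Value at the reflected point `2 - s` when `s = (1 + δ) B` and `l` is the only multiplier
admissible at `s`. -/
lemma gap_upper {A B δ l : ℝ} (h : δ * ((1 + δ) * B) * l = B - A) :
    ((1 + δ) * B) * gapForm A B δ (2 - (1 + δ) * B) l =
      4 * l * ((1 + δ) * B - 1) * ((1 + δ) * B * (A + B) - 2 * B - δ * (A + B)) := by
  unfold gapForm
  linear_combination
    (((1 + δ) * B) * (B - A) - δ * l * (2 - (1 + δ) * B) ^ 2) * h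

/-- Feasibility of `ρ = max (1 - (1 - δ) A) ((1 + δ) B - 1)`, with the thresholds on the step size
in denominator-free form. -/
lemma feasible_iff {A B δ ρ : ℝ} (hA : 0 < A) (hAB : A < B) (hδ0 : 0 < δ) (hδ1 : δ < 1)
    (hρ : ρ = max (1 - (1 - δ) * A) ((1 + δ) * B - 1)) :
    (∃ l ∈ Set.Icc (0 : ℝ) (2 / δ ^ 2),
        0 ≤ gapForm A B δ (1 - ρ) l ∧ 0 ≤ gapForm A B δ (1 + ρ) l) ↔
      0 ≤ 2 * A - δ * (A + B) - (1 - δ) * A * (A + B) ∨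
      0 ≤ (1 + δ) * B * (A + B) - 2 * B - δ * (A + B) := by
  have hB : 0 < B := hA.trans hAB
  have hs1 : 0 < (1 - δ) * A := mul_pos (by linarith) hA
  have hs2 : 0 < (1 + δ) * B := by positivity
  have hs12 : (1 - δ) * A < (1 + δ) * B := by nlinarith
  constructor
  · rintro ⟨l, -, h1, h2⟩
    rcases le_total ((1 + δ) * B - 1) (1 - (1 - δ) * A) with hc | hc
    · left
      rw [max_eq_left hc] at hρ
      rw [show 1 - ρ = (1 - δ) * A by rw [hρ]; ring, gapForm_lower] at h1
      rw [show 1 + ρ = 2 - (1 - δ) * A by rw [hρ]; ring] at h2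
      have hl : δ * ((1 - δ) * A) * l = B - A := by nlinarith
      have hlpos : 0 < l := pos_of_mul_pos_right (a := δ * ((1 - δ) * A))
        (by rw [hl]; linarith) (by positivity)
      have hg := gap_lower hl
      have hc' : 0 < 4 * l * (1 - (1 - δ) * A) := mul_pos (by positivity) (by linarith)
      exact nonneg_of_mul_nonneg_right (hg ▸ mul_nonneg hs1.le h2) hc'
    · right
      rw [max_eq_right hc] at hρ
      rw [show 1 + ρ = (1 + δ) * B by rw [hρ]; ring, gapForm_upper] at h2
      rw [show 1 - ρ = 2 - (1 + δ) * B by rw [hρ]; ring] at h1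
      have hl : δ * ((1 + δ) * B) * l = B - A := by nlinarith
      have hlpos : 0 < l := pos_of_mul_pos_right (a := δ * ((1 + δ) * B))
        (by rw [hl]; linarith) (by positivity)
      have hg := gap_upper hl
      have hc' : 0 < 4 * l * ((1 + δ) * B - 1) := mul_pos (by positivity) (by linarith)
      exact nonneg_of_mul_nonneg_right (hg ▸ mul_nonneg hs2.le h1) hc'
  · rintro (hE | hE)
    · have hAB2 : A + B < 2 := by
        by_contra! hcon
        nlinarith [mul_nonneg hs1.le (sub_nonneg.2 hcon), mul_pos hδ0 (sub_pos.2 hAB)]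
      have hs1' : (1 - δ) * A < 1 := by nlinarith
      -- The threshold inequality places `ρ` in the regime where the first entry is the maximum.
      have hc : (1 + δ) * B - 1 ≤ 1 - (1 - δ) * A := by
        have h0 : 0 ≤ (1 - δ) * A * (2 - (1 - δ) * A - (1 + δ) * B) := by
          nlinarith [mul_pos (mul_pos hδ0 (sub_pos.2 hAB)) (sub_pos.2 hs1')]
        linarith [nonneg_of_mul_nonneg_right h0 hs1]
      rw [max_eq_left hc] at hρ
      have hl : δ * ((1 - δ) * A) * ((B - A) / (δ * ((1 - δ) * A))) = B - A :=
        mul_div_cancel₀ _ (by positivity)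
      have hlnn : 0 < (B - A) / (δ * ((1 - δ) * A)) :=
        div_pos (by linarith) (by positivity)
      refine ⟨(B - A) / (δ * ((1 - δ) * A)), ⟨hlnn.le, ?_⟩, ?_, ?_⟩
      · rw [div_le_div_iff₀ (by positivity) (by positivity)]
        have : δ * (B - A) ≤ 2 * ((1 - δ) * A) := by nlinarith [mul_pos hs1 (add_pos hA hB)]
        nlinarith
      · rw [show 1 - ρ = (1 - δ) * A by rw [hρ]; ring, gapForm_lower, hl]
        simp
      · rw [show 1 + ρ = 2 - (1 - δ) * A by rw [hρ]; ring]
        refine nonneg_of_mul_nonneg_right (a := (1 - δ) * A) ?_ hs1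
        rw [gap_lower hl]
        exact mul_nonneg (mul_nonneg (by positivity) (by linarith)) hE
    · have hs2' : 1 < (1 + δ) * B := by
        by_contra! hcon
        nlinarith [mul_nonneg (sub_nonneg.2 hcon) (add_pos hA hB).le, mul_pos hδ0 (add_pos hA hB)]
      -- The threshold inequality places `ρ` in the regime where the second entry is the maximum.
      have hc : 1 - (1 - δ) * A ≤ (1 + δ) * B - 1 := by
        have h0 : 0 ≤ (1 + δ) * B * ((1 - δ) * A - 2 + (1 + δ) * B) := by
          nlinarith [mul_pos (mul_pos hδ0 (sub_pos.2 hAB)) (sub_pos.2 hs2')]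
        linarith [nonneg_of_mul_nonneg_right h0 hs2]
      rw [max_eq_right hc] at hρ
      have hl : δ * ((1 + δ) * B) * ((B - A) / (δ * ((1 + δ) * B))) = B - A :=
        mul_div_cancel₀ _ (by positivity)
      have hlnn : 0 < (B - A) / (δ * ((1 + δ) * B)) :=
        div_pos (by linarith) (by positivity)
      refine ⟨(B - A) / (δ * ((1 + δ) * B)), ⟨hlnn.le, ?_⟩, ?_, ?_⟩
      · rw [div_le_div_iff₀ (by positivity) (by positivity)]
        have : δ * (B - A) ≤ 2 * ((1 + δ) * B) := by nlinarith
        nlinarith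
      · rw [show 1 - ρ = 2 - (1 + δ) * B by rw [hρ]; ring]
        refine nonneg_of_mul_nonneg_right (a := (1 + δ) * B) ?_ hs2
        rw [gap_upper hl]
        exact mul_nonneg (mul_nonneg (by positivity) (by linarith)) hE
      · rw [show 1 + ρ = (1 + δ) * B by rw [hρ]; ring, gapForm_upper, hl]
        simp

/-- The feasible set is closed: it is a projection along the compact interval of multipliers. -/
lemma isClosed_feasible (F : ℝ → ℝ → ℝ) (hF : Continuous fun p : ℝ × ℝ => F p.1 p.2) (r c : ℝ) :
    IsClosed {ρ : ℝ | r ≤ ρ ∧ ∃ l ∈ Set.Icc (0 : ℝ) c, 0 ≤ F ρ l ∧ 0 ≤ F (-ρ) l} := by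
  have h1 : IsClosed {p : ℝ × Set.Icc (0 : ℝ) c | 0 ≤ F p.1 p.2 ∧ 0 ≤ F (-p.1) p.2} := by
    have hp : Continuous fun p : ℝ × Set.Icc (0 : ℝ) c => F p.1 p.2 :=
      hF.comp (by fun_prop : Continuous fun p : ℝ × Set.Icc (0 : ℝ) c => (p.1, (p.2 : ℝ)))
    have hn : Continuous fun p : ℝ × Set.Icc (0 : ℝ) c => F (-p.1) p.2 :=
      hF.comp (by fun_prop : Continuous fun p : ℝ × Set.Icc (0 : ℝ) c => (-p.1, (p.2 : ℝ)))
    exact (isClosed_le continuous_const hp).inter (isClosed_le continuous_const hn)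
  have h2 := isClosedMap_fst_of_compactSpace _ h1
  convert isClosed_Ici (a := r) |>.inter h2 using 1
  ext ρ
  constructor
  · rintro ⟨hr, l, hl, h⟩
    exact ⟨hr, ⟨(ρ, ⟨l, hl⟩), h, rfl⟩⟩
  · rintro ⟨hr, ⟨⟨ρ', l⟩, h, rfl⟩⟩
    exact ⟨hr, l, l.2, h⟩

/-- **Lemma 3.2 (characterization of `ρ⋆ = ρ_GD(δ)`).**
Let `0 < m < L`, `δ ∈ (0,1)`, `α > 0`, `κ = L/m`, and let `F`, `ρ_GD(δ)` and `ρ⋆` be as in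
the paper.  Then `ρ⋆ = ρ_GD(δ)` iff either `δ < 2/(κ+1)` and
`α ≤ α₋ = (1/(1-δ))(2/(L+m) - δ/m)`, or `α ≥ α₊ = (1/(1+δ))(2/(L+m) + δ/L)`. -/
theorem stmt_16 (m L α δ : ℝ) (hm : 0 < m) (hmL : m < L) (hα : 0 < α)
    (hδ0 : 0 < δ) (hδ1 : δ < 1)
    (F : ℝ → ℝ → ℝ)
    (hF : ∀ t l, F t l = -α ^ 2 * (L - m) ^ 2 + 2 * m * L * α ^ 2 * l * (1 - δ ^ 2) +
      2 * α * l * (m + L) * (t - 1) + l * (2 - δ ^ 2 * l) * (t - 1) ^ 2)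
    (ρGD : ℝ) (hρGD : ρGD = max (1 - (1 - δ) * (α * m)) ((1 + δ) * (α * L) - 1))
    (ρs : ℝ)
    (hρs : ρs = sInf {ρ : ℝ | ρGD ≤ ρ ∧
      ∃ l ∈ Set.Icc (0 : ℝ) (2 / δ ^ 2), 0 ≤ F ρ l ∧ 0 ≤ F (-ρ) l}) :
    ρs = ρGD ↔
      (δ < 2 / (L / m + 1) ∧ α ≤ 1 / (1 - δ) * (2 / (L + m) - δ / m)) ∨
      (1 / (1 + δ) * (2 / (L + m) + δ / L) ≤ α) := by
  have hL : 0 < L := hm.trans hmL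
  have hA : 0 < α * m := by positivity
  have hAB : α * m < α * L := mul_lt_mul_of_pos_left hmL hα
  have hpos : 0 < ρGD := by
    by_contra! hcon
    have h1 := (le_max_left (1 - (1 - δ) * (α * m)) ((1 + δ) * (α * L) - 1)).trans (hρGD ▸ hcon)
    have h2 := (le_max_right (1 - (1 - δ) * (α * m)) ((1 + δ) * (α * L) - 1)).trans (hρGD ▸ hcon)
    nlinarith
  have hFG : ∀ t l, F t l = gapForm (α * m) (α * L) δ (1 - t) l := by
    intro t l; rw [hF]; unfold gapForm; ring
  have hcont : Continuous fun p : ℝ × ℝ => F p.1 p.2 := by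
    simp only [hF]; fun_prop
  have hclosed := isClosed_feasible F hcont ρGD (2 / δ ^ 2)
  set S := {ρ : ℝ | ρGD ≤ ρ ∧
      ∃ l ∈ Set.Icc (0 : ℝ) (2 / δ ^ 2), 0 ≤ F ρ l ∧ 0 ≤ F (-ρ) l} with hS
  have hbdd : ρGD ∈ lowerBounds S := fun ρ hρ => hρ.1
  have hmem : ρs = ρGD ↔ ρGD ∈ S := by
    constructor
    · intro h
      have hne : S.Nonempty := by
        by_contra! hemp
        rw [hemp, Real.sInf_empty] at hρs
        linarith
      have := hclosed.csInf_mem hne ⟨ρGD, hbdd⟩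
      rwa [← hρs, h] at this
    · intro h
      rw [hρs]
      exact IsLeast.csInf_eq ⟨h, hbdd⟩
  have hmem' : ρGD ∈ S ↔ ∃ l ∈ Set.Icc (0 : ℝ) (2 / δ ^ 2),
      0 ≤ gapForm (α * m) (α * L) δ (1 - ρGD) l ∧ 0 ≤ gapForm (α * m) (α * L) δ (1 + ρGD) l := by
    simp only [hS, Set.mem_ofPred_eq, hFG, le_refl, true_and, sub_neg_eq_add]
  rw [hmem, hmem', feasible_iff hA hAB hδ0 hδ1 hρGD]
  have hd : 0 < 1 - δ := by linarith
  have hLm : 0 < L + m := by linarith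
  have hlow : α ≤ 1 / (1 - δ) * (2 / (L + m) - δ / m) ↔
      (1 - δ) * α * (m * (L + m)) ≤ 2 * m - δ * (L + m) := by
    rw [show 1 / (1 - δ) * (2 / (L + m) - δ / m) =
      (2 * m - δ * (L + m)) / ((1 - δ) * (m * (L + m))) by field_simp, le_div_iff₀ (by positivity)]
    constructor <;> intro h <;> linarith
  have hupp : 1 / (1 + δ) * (2 / (L + m) + δ / L) ≤ α ↔
      2 * L + δ * (L + m) ≤ (1 + δ) * α * (L * (L + m)) := by
    rw [show 1 / (1 + δ) * (2 / (L + m) + δ / L) =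
      (2 * L + δ * (L + m)) / ((1 + δ) * (L * (L + m))) by field_simp,
      div_le_iff₀ (by positivity)]
    constructor <;> intro h <;> linarith
  have hκ : δ < 2 / (L / m + 1) ↔ 0 < 2 * m - δ * (L + m) := by
    rw [show 2 / (L / m + 1) = 2 * m / (L + m) by field_simp, lt_div_iff₀ hLm, sub_pos]
  rw [hlow, hupp, hκ]
  refine or_congr ?_ ?_
  · rw [show 2 * (α * m) - δ * (α * m + α * L) - (1 - δ) * (α * m) * (α * m + α * L) =
      α * (2 * m - δ * (L + m) - (1 - δ) * α * (m * (L + m))) by ring,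
      mul_nonneg_iff_of_pos_left hα, sub_nonneg]
    exact ⟨fun h => ⟨lt_of_lt_of_le (by positivity) h, h⟩, fun h => h.2⟩
  · rw [show (1 + δ) * (α * L) * (α * m + α * L) - 2 * (α * L) - δ * (α * m + α * L) =
      α * ((1 + δ) * α * (L * (L + m)) - (2 * L + δ * (L + m))) by ring,
      mul_nonneg_iff_of_pos_left hα, sub_nonneg]
end

section
/- Let 0 < m < L, δ ∈ (0,1), κ = L/m, and let α satisfy α > max(α₋, 0) where α₋ = (1/(1−δ))·(2/(L+m) − δ/m), together with α ≤ 2/((1+δ)L + (1−δ)m). Set ρ⋆ = 1 − αm(1−δ) and γ⋆ = ρ⋆(κ−1 + (κ+1)(δ−ρ⋆)) / ((κ−(1−δ))δ). Then 0 < γ⋆ < ρ⋆². -/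
/-!
Write `κ = L/m`, `N = (1+δ)κ - (1-δ)` and `D = (1+δ)κ + (1-δ)`, so that
`γ⋆ = ρ⋆ (N - (κ+1)ρ⋆) / ((κ-(1-δ))δ)`. The upper bound on `α` is equivalent to `N ≤ ρ⋆ D`, which
gives `ρ⋆ > 0`; the bound `α > α₋` is equivalent to `(κ+1)ρ⋆ < N`, which gives `γ⋆ > 0`. Finally
`γ⋆ < ρ⋆²` amounts to `N < ρ⋆ (κ + 1 + (κ-(1-δ))δ) = ρ⋆ (D + δ²)`, which follows from `N ≤ ρ⋆ D`.
-/

/-- **Lemma 3.4 (bounds on `γ⋆`).**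
Let `0 < m < L`, `δ ∈ (0,1)`, `κ = L/m`, and suppose
`α > max(α₋, 0)` with `α₋ = (1/(1-δ))(2/(L+m) - δ/m)` and `α ≤ 2/((1+δ)L + (1-δ)m)`.  With
`ρ⋆ = 1 - αm(1-δ)` and `γ⋆ = ρ⋆(κ-1 + (κ+1)(δ-ρ⋆))/((κ-(1-δ))δ)`, one has `0 < γ⋆ < ρ⋆²`. -/
theorem stmt_17 (m L α δ : ℝ) (hm : 0 < m) (hmL : m < L)
    (hδ0 : 0 < δ) (hδ1 : δ < 1)
    (hα1 : max (1 / (1 - δ) * (2 / (L + m) - δ / m)) 0 < α)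
    (hα2 : α ≤ 2 / ((1 + δ) * L + (1 - δ) * m))
    (ρs : ℝ) (hρs : ρs = 1 - α * m * (1 - δ))
    (γs : ℝ) (hγs : γs = ρs * (L / m - 1 + (L / m + 1) * (δ - ρs)) / ((L / m - (1 - δ)) * δ)) :
    0 < γs ∧ γs < ρs ^ 2 := by
  obtain ⟨hα, -⟩ := max_lt_iff.mp hα1
  have hd : 0 < 1 - δ := by linarith
  obtain ⟨κ, hκ⟩ : ∃ κ, κ = L / m := ⟨_, rfl⟩
  have hL : L = κ * m := by rw [hκ]; field_simp
  have hκ1 : 1 < κ := by rw [hκ]; exact (one_lt_div hm).mpr hmL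
  rw [← hκ] at hγs
  subst hL
  have hD : 0 < (1 + δ) * κ + (1 - δ) := by positivity
  have hN : 0 < (1 + δ) * κ - (1 - δ) := by nlinarith
  have hND : (1 + δ) * κ - (1 - δ) ≤ ρs * ((1 + δ) * κ + (1 - δ)) := by
    have h : α * ((1 + δ) * (κ * m) + (1 - δ) * m) ≤ 2 :=
      (le_div_iff₀ (by positivity)).mp hα2
    rw [hρs]
    nlinarith [mul_le_mul_of_nonneg_left h hd.le]
  have hρ : 0 < ρs := pos_of_mul_pos_left (hN.trans_le hND) hD.le
  have hpos : 0 < κ - 1 + (κ + 1) * (δ - ρs) := by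
    have h1 : 2 / (κ * m + m) - δ / m < α * (1 - δ) := by
      have h2 := mul_lt_mul_of_pos_right hα hd
      have h3 : 1 / (1 - δ) * (2 / (κ * m + m) - δ / m) * (1 - δ)
          = 2 / (κ * m + m) - δ / m := by
        rw [mul_right_comm, one_div_mul_cancel hd.ne', one_mul]
      rwa [h3] at h2
    have h4 : 0 < κ * m + m := by positivity
    have h5 := mul_lt_mul_of_pos_right h1 h4
    have h6 : (2 / (κ * m + m) - δ / m) * (κ * m + m) = 2 - δ * (κ + 1) := by
      rw [sub_mul, div_mul_cancel₀ _ h4.ne']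
      field_simp
    rw [h6] at h5
    rw [hρs]
    linarith
  have hden : 0 < (κ - (1 - δ)) * δ := mul_pos (by linarith) hδ0
  rw [hγs]
  refine ⟨div_pos (mul_pos hρ hpos) hden, ?_⟩
  rw [div_lt_iff₀ hden, sq, mul_assoc]
  refine mul_lt_mul_of_pos_left ?_ hρ
  have : 0 < ρs * δ ^ 2 := by positivity
  linarith
end

section
/- Let 0 < m < L, δ ∈ (0,1), κ = L/m, and let α satisfy α > α₋ := (1/(1−δ))·(2/(L+m) − δ/m) and 1/L ≤ α ≤ 2/((1+δ)L + (1−δ)m). Set ρ⋆ = 1 − αm(1−δ), λ⋆ = (2 − α(L+m))/δ², and γ⋆ = ρ⋆(κ−1 + (κ+1)(δ−ρ⋆))/((κ−(1−δ))δ). Then 2γ⋆(αL−1)·((2 + λ⋆(1−δ²))(1−αm) − γ⋆) − 2λ⋆γ⋆ρ⋆² ≤ 0. -/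
/-!
Put `p = 1 - αm` and `q = αL - 1`, so that `δ² λ⋆ = p - q` and `ρ⋆ = δ + (1-δ)p`. The lower bound
`α > α₋` says exactly that `γ⋆ > 0`, so a factor `2γ⋆` can be removed, and the remaining `-γ⋆` only
helps because `q ≥ 0`. What is left is `q (2 + λ⋆(1-δ²)) p ≤ λ⋆ ρ⋆²`, i.e. `core_ineq` divided
by `δ²`; it follows from the upper bound on `α`, which reads `(1+δ) q ≤ (1-δ) p`.
-/

/-- The inequality in the variables `p = 1 - αm`, `q = αL - 1`. Both `p - q ≥ 2δp/(1+δ)` and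
`ρ⋆² - (1-δ²)pq ≥ ρ⋆² - (1-δ)²p² ≥ δ(1-δ)p` follow from the bound on `q`, and their product
dominates `2δ²pq`. -/
lemma core_ineq {p q δ : ℝ} (hp : 0 < p) (hδ0 : 0 < δ) (hδ1 : δ < 1)
    (hpq : (1 + δ) * q ≤ (1 - δ) * p) :
    q * (2 * δ ^ 2 + (p - q) * (1 - δ ^ 2)) * p ≤ (p - q) * (δ + (1 - δ) * p) ^ 2 := by
  have h1δ : 0 < 1 - δ := by linarith
  have hX : δ * (1 - δ) * p ≤ (δ + (1 - δ) * p) ^ 2 - (1 - δ ^ 2) * p * q := by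
    have h := mul_le_mul_of_nonneg_left hpq (mul_pos h1δ hp).le
    have h' : 0 < δ * (1 - δ) * p := by positivity
    nlinarith [sq_nonneg δ]
  have hS : 2 * δ * p ≤ (1 + δ) * (p - q) := by linarith
  have hprod : 2 * δ * p * (δ * (1 - δ) * p) ≤
      (1 + δ) * (p - q) * ((δ + (1 - δ) * p) ^ 2 - (1 - δ ^ 2) * p * q) :=
    mul_le_mul hS hX (by positivity) (le_trans (by positivity) hS)
  have hq := mul_le_mul_of_nonneg_left hpq (show 0 ≤ 2 * δ ^ 2 * p by positivity)
  refine le_of_mul_le_mul_left ?_ (show 0 < 1 + δ by linarith)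
  linarith


/-- **Lemma 3.5 (`∂ₜF(0, ρ⋆, λ⋆, γ⋆) ≤ 0`).**
Let `0 < m < L`, `δ ∈ (0,1)`, `κ = L/m`, and suppose `α > α₋ = (1/(1-δ))(2/(L+m) - δ/m)`
and `1/L ≤ α ≤ 2/((1+δ)L + (1-δ)m)`.  With `ρ⋆ = 1 - αm(1-δ)`, `λ⋆ = (2 - α(L+m))/δ²` and
`γ⋆ = ρ⋆(κ-1 + (κ+1)(δ-ρ⋆))/((κ-(1-δ))δ)`, one has
`2γ⋆(αL-1)((2 + λ⋆(1-δ²))(1-αm) - γ⋆) - 2λ⋆γ⋆ρ⋆² ≤ 0`. -/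
theorem stmt_18 (m L α δ : ℝ) (hm : 0 < m) (hmL : m < L)
    (hδ0 : 0 < δ) (hδ1 : δ < 1)
    (hα0 : 1 / (1 - δ) * (2 / (L + m) - δ / m) < α)
    (hα1 : 1 / L ≤ α) (hα2 : α ≤ 2 / ((1 + δ) * L + (1 - δ) * m))
    (ρs : ℝ) (hρs : ρs = 1 - α * m * (1 - δ))
    (lams : ℝ) (hlams : lams = (2 - α * (L + m)) / δ ^ 2)
    (γs : ℝ) (hγs : γs = ρs * (L / m - 1 + (L / m + 1) * (δ - ρs)) / ((L / m - (1 - δ)) * δ)) :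
    2 * γs * (α * L - 1) * ((2 + lams * (1 - δ ^ 2)) * (1 - α * m) - γs) -
      2 * lams * γs * ρs ^ 2 ≤ 0 := by
  have hL : 0 < L := hm.trans hmL
  have h1δ : 0 < 1 - δ := by linarith
  have hαL : 1 ≤ α * L := by rwa [div_le_iff₀ hL] at hα1
  have hα : 0 < α := lt_of_lt_of_le (by positivity) hα1
  have hup : α * ((1 + δ) * L + (1 - δ) * m) ≤ 2 := by
    rwa [le_div_iff₀ (by positivity)] at hα2
  have hδd : 0 < δ * (α * (L - m)) := mul_pos hδ0 (mul_pos hα (by linarith))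
  have hp : 0 < 1 - α * m := by linarith
  have hρ : ρs = δ + (1 - δ) * (1 - α * m) := by rw [hρs]; ring
  have hρpos : 0 < ρs := by rw [hρ]; positivity
  -- The second factor in the numerator of `γ⋆` equals `(1-δ)(L+m)(α - α₋)`.
  have hnum : 0 < L / m - 1 + (L / m + 1) * (δ - ρs) := by
    have h : L / m - 1 + (L / m + 1) * (δ - ρs) =
        (1 - δ) * (L + m) * (α - 1 / (1 - δ) * (2 / (L + m) - δ / m)) := by
      have : L + m ≠ 0 := by positivity
      rw [hρs]
      field_simp
      ring
    rw [h]
    exact mul_pos (by positivity) (by linarith)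
  have hden : 0 < L / m - (1 - δ) := by
    have : 1 < L / m := by rwa [one_lt_div hm]
    linarith
  have hγ : 0 < γs := by rw [hγs]; positivity
  have hlam : lams * δ ^ 2 = (1 - α * m) - (α * L - 1) := by
    rw [hlams]
    field_simp
    ring
  have hcore := core_ineq (q := α * L - 1) hp hδ0 hδ1 (by linarith)
  rw [← hρ, ← hlam] at hcore
  have hmain : (α * L - 1) * ((2 + lams * (1 - δ ^ 2)) * (1 - α * m)) ≤ lams * ρs ^ 2 := by
    refine le_of_mul_le_mul_left ?_ (show 0 < δ ^ 2 by positivity)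
    linarith
  have hqγ : 0 ≤ (α * L - 1) * γs := mul_nonneg (by linarith) hγ.le
  have := mul_le_mul_of_nonneg_left
    (show (α * L - 1) * ((2 + lams * (1 - δ ^ 2)) * (1 - α * m)) - (α * L - 1) * γs
      ≤ lams * ρs ^ 2 by linarith) (show 0 ≤ 2 * γs by linarith)
  linarith
end

section
/- Let 0 < m < L, δ ∈ (0,1), and suppose α > α₋ := (1/(1−δ))·(2/(L+m) − δ/m) and 1/L ≤ α ≤ 2/((1+δ)L + (1−δ)m). Set ρ⋆ = 1 − αm(1−δ), λ⋆ = (2 − α(L+m))/δ², κ = L/m, and γ⋆ = ρ⋆(κ−1 + (κ+1)(δ−ρ⋆))/((κ−(1−δ))δ). Then for the polynomial F(t,ρ,λ,γ) = −α²((L−m)² − 2mLλ(1−δ²))ρ² − γ²(t−1+Lα)² + 2λαρ²(L+m)(t−1) + λρ²(2−λδ²)(t−1)² − 2αγ((L−m)−mλ(1−δ²))(1−αL−t)t + 2λγ((1−αL)t−ρ²)(t−1), one has F(ρ⋆, ρ⋆, λ⋆, γ⋆) ≥ 0 and F(−ρ⋆, ρ⋆, λ⋆, γ⋆) ≥ 0;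 in fact F(ρ⋆, ρ⋆, λ⋆, γ⋆) = 0. -/
/-!
Write `q = αL - 1 ≥ 0` and `s = 2 - α((1+δ)L + (1-δ)m) ≥ 0`.  The value `F(ρ⋆) = 0` is a rational
identity in the parameters.  As `F` is quadratic in `t`, `F(-ρ⋆) - F(ρ⋆)` is `-2ρ⋆` times its linear
coefficient, and `λ⋆δ² = 2 - α(L+m)` turns this into `F(-ρ⋆) = 4 ρ⋆ γ⋆ G` with
`G = q(γ⋆ - α(L-m)) + λ⋆(ρ⋆² - q(1 - αm(1-δ²)))`.

The last bracket equals `ρ⋆ s + δ(ρ⋆ + q)` and `δ² λ⋆ = s + αδ(L-m)`, so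
`λ⋆(ρ⋆² - …) ≥ δλ⋆(ρ⋆ + q) ≥ α(L-m)(ρ⋆ + q)`, which absorbs the only negative term of `G`.
The bound `α > α₋` gives `γ⋆ ≥ 0`.
-/

/-- **Nonnegativity of the frequency polynomial at `t = ±ρ⋆` (proof of Proposition 3).**
Let `0 < m < L`, `δ ∈ (0,1)`, `α > α₋ = (1/(1-δ))(2/(L+m) - δ/m)` and
`1/L ≤ α ≤ 2/((1+δ)L + (1-δ)m)`.  With `ρ⋆ = 1 - αm(1-δ)`, `λ⋆ = (2 - α(L+m))/δ²`,
`κ = L/m`, `γ⋆ = ρ⋆(κ-1 + (κ+1)(δ-ρ⋆))/((κ-(1-δ))δ)`, and `F` the off-by-one frequency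
polynomial, one has `F(ρ⋆,ρ⋆,λ⋆,γ⋆) ≥ 0` and `F(-ρ⋆,ρ⋆,λ⋆,γ⋆) ≥ 0`; in fact
`F(ρ⋆,ρ⋆,λ⋆,γ⋆) = 0`. -/
theorem stmt_19 (m L α δ : ℝ) (hm : 0 < m) (hmL : m < L)
    (hδ0 : 0 < δ) (hδ1 : δ < 1)
    (hα0 : 1 / (1 - δ) * (2 / (L + m) - δ / m) < α)
    (hα1 : 1 / L ≤ α) (hα2 : α ≤ 2 / ((1 + δ) * L + (1 - δ) * m))
    (ρs : ℝ) (hρs : ρs = 1 - α * m * (1 - δ))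
    (lams : ℝ) (hlams : lams = (2 - α * (L + m)) / δ ^ 2)
    (γs : ℝ) (hγs : γs = ρs * (L / m - 1 + (L / m + 1) * (δ - ρs)) / ((L / m - (1 - δ)) * δ))
    (F : ℝ → ℝ → ℝ → ℝ → ℝ)
    (hF : ∀ t ρ l γ, F t ρ l γ =
      -α ^ 2 * ((L - m) ^ 2 - 2 * m * L * l * (1 - δ ^ 2)) * ρ ^ 2 -
        γ ^ 2 * (t - 1 + L * α) ^ 2 +
        2 * l * α * ρ ^ 2 * (L + m) * (t - 1) +
        l * ρ ^ 2 * (2 - l * δ ^ 2) * (t - 1) ^ 2 -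
        2 * α * γ * ((L - m) - m * l * (1 - δ ^ 2)) * (1 - α * L - t) * t +
        2 * l * γ * ((1 - α * L) * t - ρ ^ 2) * (t - 1)) :
    0 ≤ F ρs ρs lams γs ∧ 0 ≤ F (-ρs) ρs lams γs ∧ F ρs ρs lams γs = 0 := by
  have hL : 0 < L := hm.trans hmL
  have hd : 0 < 1 - δ := by linarith
  have hα : 0 < α := lt_of_lt_of_le (by positivity) hα1
  have hq : 0 ≤ α * L - 1 := by
    rw [div_le_iff₀ hL] at hα1
    linarith
  have hs : 0 ≤ 2 - α * ((1 + δ) * L + (1 - δ) * m) := by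
    rw [le_div_iff₀ (by positivity)] at hα2
    linarith
  have hαL : 0 < α * L * δ := by positivity
  have hρ : 0 < ρs := by
    rw [hρs]
    nlinarith
  have hD : 0 < L - m * (1 - δ) := by nlinarith [mul_pos hm hδ0]
  have hl : lams * δ ^ 2 = 2 - α * (L + m) := by
    rw [hlams]
    field_simp
  have hγ' : γs = ρs * (L - m + (L + m) * (δ - ρs)) / ((L - m * (1 - δ)) * δ) := by
    have h1 : L / m - (1 - δ) = (L - m * (1 - δ)) / m := by field_simp
    have h2 : L / m - 1 + (L / m + 1) * (δ - ρs) = (L - m + (L + m) * (δ - ρs)) / m := by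
      field_simp
    rw [hγs, h1, h2]
    field_simp
  -- The condition `α > α₋`, with denominators cleared, is positivity of the numerator of `γ⋆`.
  have hN : 0 < L - m + (L + m) * (δ - ρs) := by
    have h1 : 1 / (1 - δ) * (2 / (L + m) - δ / m)
        = (2 * m - δ * (L + m)) / ((1 - δ) * ((L + m) * m)) := by
      field_simp
    rw [h1, div_lt_iff₀ (by positivity)] at hα0
    have h2 : 0 < m * (L - m + (L + m) * (δ - ρs)) := by
      rw [hρs]
      nlinarith
    exact pos_of_mul_pos_right h2 hm.le
  have hγ : 0 ≤ γs := by
    rw [hγ']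
    positivity
  have hzero : F ρs ρs lams γs = 0 := by
    rw [hF, hγ', hlams, hρs]
    field_simp
    ring
  have hG : 0 ≤ (α * L - 1) * (γs - α * (L - m))
      + lams * (ρs ^ 2 - (α * L - 1) * (1 - α * m * (1 - δ ^ 2))) := by
    have hH : ρs ^ 2 - (α * L - 1) * (1 - α * m * (1 - δ ^ 2))
        = ρs * (2 - α * ((1 + δ) * L + (1 - δ) * m)) + δ * (ρs + (α * L - 1)) := by
      rw [hρs]
      ring
    have hlδ : α * (L - m) ≤ lams * δ := by
      have : δ * (α * (L - m)) ≤ δ * (lams * δ) := by nlinarith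
      exact le_of_mul_le_mul_left this hδ0
    have hl0 : 0 ≤ lams := by
      have : 0 ≤ α * (L - m) := mul_nonneg hα.le (by linarith)
      exact nonneg_of_mul_nonneg_left (this.trans hlδ) hδ0
    rw [hH]
    have h1 := mul_nonneg hl0 (mul_nonneg hρ.le hs)
    have h2 := mul_le_mul_of_nonneg_right hlδ (add_nonneg hρ.le hq)
    have h3 := mul_nonneg hq hγ
    have h4 : 0 ≤ α * (L - m) * ρs := mul_nonneg (mul_nonneg hα.le (by linarith)) hρ.le
    linarith
  have hneg : F (-ρs) ρs lams γs = 4 * (ρs * γs * ((α * L - 1) * (γs - α * (L - m))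
      + lams * (ρs ^ 2 - (α * L - 1) * (1 - α * m * (1 - δ ^ 2))))) := by
    have h := hzero
    rw [hF] at h ⊢
    linear_combination h - 4 * lams * ρs ^ 3 * hl
  refine ⟨hzero.ge, ?_, hzero⟩
  rw [hneg]
  positivity
end
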